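/- arXiv:1706.00451 — 2 statements merged into one kernel-verified Lean document; each statement's English description precedes it below -/
import Mathlib

section
/- Let ρ be a binary constant-length substitution of length L ≥ 2 which has at least one coincidence position (C_a ∪ C_b ≠ ∅) and at least one bijective position (P_a ∪ P_b ≠ ∅), and for which w_a ≠ a^L and w_b ≠ b^L. Then the unital ℂ-subalgebra of M₂(ℂ) generated by the digit matrices equals the three-dimensional algebra {M ∈ M₂(ℂ) : M₁₁ + M₂₁ = M₁₂ + M₂₂} (the IDA of the period doubling substitution). -/
noncomputable section

/-- Coincidence positions of type `a` (letter `a` encoded as `0`, `b` as `1`). -/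
def Ca {L : ℕ} (wa wb : Fin L → Fin 2) : Finset (Fin L) :=
  Finset.univ.filter fun i => wa i = 0 ∧ wb i = 0

/-- Coincidence positions of type `b`. -/
def Cb {L : ℕ} (wa wb : Fin L → Fin 2) : Finset (Fin L) :=
  Finset.univ.filter fun i => wa i = 1 ∧ wb i = 1

/-- Bijective positions where `(w_a)_i = a` and `(w_b)_i = b`. -/
def Pa {L : ℕ} (wa wb : Fin L → Fin 2) : Finset (Fin L) :=
  Finset.univ.filter fun i => wa i = 0 ∧ wb i = 1

/-- Bijective positions where `(w_a)_i = b` and `(w_b)_i = a`. -/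
def Pb {L : ℕ} (wa wb : Fin L → Fin 2) : Finset (Fin L) :=
  Finset.univ.filter fun i => wa i = 1 ∧ wb i = 0

/-- The digit (instruction) matrix at position `x`: `(D_x)_{αβ} = 1` if `(w_β)_x = α`,
and `0` otherwise. -/
def digit {L : ℕ} (wa wb : Fin L → Fin 2) (x : Fin L) : Matrix (Fin 2) (Fin 2) ℂ :=
  Matrix.of fun α β => if (![wa, wb] β) x = α then 1 else 0
/-- For a binary constant-length substitution of length `L ≥ 2` with at least
one coincidence position and at least one bijective position, and with `w_a ≠ a^L` and
`w_b ≠ b^L`, the unital ℂ-subalgebra of `M₂(ℂ)` generated by the digit matrices equals the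
three-dimensional period-doubling IDA `{M ∈ M₂(ℂ) : M₁₁ + M₂₁ = M₁₂ + M₂₂}`. -/
theorem coincidence_binary_substitution_IDA
    (L : ℕ) (hL : 2 ≤ L) (wa wb : Fin L → Fin 2)
    (hC : (Ca wa wb ∪ Cb wa wb).Nonempty)
    (hP : (Pa wa wb ∪ Pb wa wb).Nonempty)
    (hwa : wa ≠ fun _ => 0) (hwb : wb ≠ fun _ => 1) :
    (Algebra.adjoin ℂ (Set.range (digit wa wb)) : Set (Matrix (Fin 2) (Fin 2) ℂ)) =
      {M : Matrix (Fin 2) (Fin 2) ℂ | M 0 0 + M 1 0 = M 0 1 + M 1 1} := by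
  have key : ∀ x, (wa x = 0 ∧ wb x = 0 → digit wa wb x = !![1,1;0,0]) ∧
      (wa x = 1 ∧ wb x = 1 → digit wa wb x = !![0,0;1,1]) ∧
      (wa x = 1 ∧ wb x = 0 → digit wa wb x = !![0,1;1,0]) := by
    intro x
    refine ⟨?_, ?_, ?_⟩ <;> rintro ⟨h1, h2⟩ <;> ext i j <;> fin_cases i <;> fin_cases j <;>
      simp [digit, h1, h2]
  have mem : ∀ x, digit wa wb x ∈ Algebra.adjoin ℂ (Set.range (digit wa wb)) :=
    fun x => Algebra.subset_adjoin ⟨x, rfl⟩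
  have two : ∀ y : Fin 2, y = 0 ∨ y = 1 := by decide
  have hJA : (!![0,1;1,0] : Matrix (Fin 2) (Fin 2) ℂ) * !![1,1;0,0] = !![0,0;1,1] := by
    ext i j; fin_cases i <;> fin_cases j <;> simp
  have hJB : (!![0,1;1,0] : Matrix (Fin 2) (Fin 2) ℂ) * !![0,0;1,1] = !![1,1;0,0] := by
    ext i j; fin_cases i <;> fin_cases j <;> simp
  have AB : (!![1,1;0,0] : Matrix (Fin 2) (Fin 2) ℂ) ∈
        Algebra.adjoin ℂ (Set.range (digit wa wb)) ∧
      (!![0,0;1,1] : Matrix (Fin 2) (Fin 2) ℂ) ∈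
        Algebra.adjoin ℂ (Set.range (digit wa wb)) := by
    obtain ⟨c, hc⟩ := hC
    simp only [Finset.mem_union, Ca, Cb, Finset.mem_filter, Finset.mem_univ, true_and] at hc
    rcases hc with hc | hc
    · have hA := mem c
      rw [(key c).1 hc] at hA
      refine ⟨hA, ?_⟩
      obtain ⟨x, hx⟩ := Function.ne_iff.1 hwa
      have hx1 := (two (wa x)).resolve_left hx
      have hm := mem x
      rcases two (wb x) with h | h
      · rw [(key x).2.2 ⟨hx1, h⟩] at hm
        rw [← hJA]
        exact mul_mem hm hA
      · rwa [(key x).2.1 ⟨hx1, h⟩] at hm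
    · have hB := mem c
      rw [(key c).2.1 hc] at hB
      refine ⟨?_, hB⟩
      obtain ⟨x, hx⟩ := Function.ne_iff.1 hwb
      have hx1 := (two (wb x)).resolve_right hx
      have hm := mem x
      rcases two (wa x) with h | h
      · rwa [(key x).1 ⟨h, hx1⟩] at hm
      · rw [(key x).2.2 ⟨h, hx1⟩] at hm
        rw [← hJB]
        exact mul_mem hm hB
  ext M
  simp only [SetLike.mem_coe, Set.mem_setOf_eq]
  constructor
  · intro hM
    induction hM using Algebra.adjoin_induction with
    | mem y hy =>
      obtain ⟨x, rfl⟩ := hy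
      rcases two (wa x) with h1 | h1 <;> rcases two (wb x) with h2 | h2 <;>
        simp [digit, h1, h2]
    | algebraMap r => simp [Matrix.algebraMap_matrix_apply]
    | add y z _ _ hy hz =>
      simp only [Matrix.add_apply]
      linear_combination hy + hz
    | mul y z _ _ hy hz =>
      simp only [Matrix.mul_apply, Fin.sum_univ_two]
      linear_combination (z 0 0 - z 0 1) * hy + (y 0 1 + y 1 1) * hz
  · intro h
    have hM : M = M 0 1 • !![1,1;0,0] + (M 0 0 - M 0 1) • (1 : Matrix (Fin 2) (Fin 2) ℂ)
        + M 1 0 • !![0,0;1,1] := by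
      ext i j
      fin_cases i <;> fin_cases j <;> simp
      linear_combination -h
    rw [hM]
    exact add_mem (add_mem (Subalgebra.smul_mem _ AB.1 _)
      (Subalgebra.smul_mem _ (one_mem _) _)) (Subalgebra.smul_mem _ AB.2 _)
end
end

section
/- Let D(k) = [[1, 1],[e^{2πik}, −e^{2πik}]] be the invertible block of the Fourier matrix of the Rudin–Shapiro substitution. Then (1/√2)·D(k) is unitary for every k ∈ ℝ, i.e., ‖D(k)v‖ = √2·‖v‖ for all v ∈ ℂ²; consequently, for every k ∈ ℝ, every n ≥ 1 and every v ∈ ℂ², ‖D(2^{n−1}k)·D(2^{n−2}k)···D(k)·v‖ = 2^{n/2}·‖v‖, so both Lyapunov exponents of the associated outward cocycle vanish: for every nonzero v, lim_{n→∞} (1/n)·log‖2^{n/2}·(D(2^{n−1}k)···D(k))^{−1} v‖ = 0. -/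
open Filter

noncomputable section

/-- `e k = exp(2πik)`. -/
def e (k : ℝ) : ℂ := Complex.exp (2 * Real.pi * Complex.I * k)

/-- The invertible block `D(k) = [[1, 1],[e^{2πik}, -e^{2πik}]]` of the Fourier matrix of the
Rudin–Shapiro substitution. -/
def RSblock (k : ℝ) : Matrix (Fin 2) (Fin 2) ℂ := !![1, 1; e k, -(e k)]

/-- The outward product `D(2^{n-1}k) · D(2^{n-2}k) ⋯ D(k)`. -/
def RSprod (k : ℝ) (n : ℕ) : Matrix (Fin 2) (Fin 2) ℂ :=
  (((List.range n).map fun m => RSblock ((2 : ℝ) ^ m * k)).reverse).prod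

theorem norm_e_aux (k : ℝ) : ‖e k‖ = 1 := by
  unfold e
  have : (2 * Real.pi * Complex.I * k : ℂ) = ((2 * Real.pi * k : ℝ) : ℂ) * Complex.I := by
    push_cast; ring
  rw [this, Complex.norm_exp_ofReal_mul_I]

theorem RSblock_norm_aux (k : ℝ) (v : EuclideanSpace ℂ (Fin 2)) :
    ‖Matrix.toEuclideanCLM (𝕜 := ℂ) (RSblock k) v‖ = Real.sqrt 2 * ‖v‖ := by
  have h0 : (Matrix.toEuclideanCLM (𝕜 := ℂ) (RSblock k) v) 0 = v 0 + v 1 := by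
    simp [Matrix.ofLp_toEuclideanCLM, RSblock, Matrix.mulVec, dotProduct, Fin.sum_univ_two]
  have h1 : (Matrix.toEuclideanCLM (𝕜 := ℂ) (RSblock k) v) 1 = e k * (v 0 - v 1) := by
    simp [Matrix.ofLp_toEuclideanCLM, RSblock, Matrix.mulVec, dotProduct, Fin.sum_univ_two]
    ring
  rw [EuclideanSpace.norm_eq, EuclideanSpace.norm_eq, ← Real.sqrt_mul (by norm_num)]
  congr 1
  rw [Fin.sum_univ_two, Fin.sum_univ_two, h0, h1, norm_mul, norm_e_aux, one_mul]
  have := parallelogram_law_with_norm ℝ (v 0) (v 1)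
  nlinarith [this]

theorem RSprod_succ_aux (k : ℝ) (n : ℕ) :
    RSprod k (n + 1) = RSblock ((2 : ℝ) ^ n * k) * RSprod k n := by
  simp [RSprod, List.range_succ]

theorem RSprod_norm_aux (k : ℝ) (n : ℕ) (v : EuclideanSpace ℂ (Fin 2)) :
    ‖Matrix.toEuclideanCLM (𝕜 := ℂ) (RSprod k n) v‖ = Real.sqrt 2 ^ n * ‖v‖ := by
  induction n with
  | zero => simp [RSprod]
  | succ n ih =>
    rw [RSprod_succ_aux, map_mul, ContinuousLinearMap.mul_apply, RSblock_norm_aux, ih]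
    ring

theorem RSprod_det_aux (k : ℝ) (n : ℕ) : (RSprod k n).det ≠ 0 := by
  induction n with
  | zero => simp [RSprod]
  | succ n ih =>
    rw [RSprod_succ_aux, Matrix.det_mul]
    refine mul_ne_zero ?_ ih
    have h : e (2 ^ n * k) ≠ 0 := Complex.exp_ne_zero _
    simp only [RSblock, Matrix.det_fin_two_of]
    intro h'
    apply h
    linear_combination (-1 / 2 : ℂ) * h'

theorem RSprod_inv_aux (k : ℝ) (n : ℕ) (v : EuclideanSpace ℂ (Fin 2)) :
    ‖(Real.sqrt 2 ^ n : ℝ) • Matrix.toEuclideanCLM (𝕜 := ℂ) ((RSprod k n)⁻¹) v‖ = ‖v‖ := by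
  rw [norm_smul, Real.norm_of_nonneg (by positivity), ← RSprod_norm_aux k n,
    ← ContinuousLinearMap.mul_apply, ← map_mul,
    Matrix.mul_nonsing_inv _ (isUnit_iff_ne_zero.mpr (RSprod_det_aux k n)), map_one]
  rfl

/-- `(1/√2)·D(k)` is unitary for every `k`, i.e. `‖D(k)v‖ = √2·‖v‖` for all
`v ∈ ℂ²`; consequently `‖D(2^{n-1}k)⋯D(k)·v‖ = 2^{n/2}·‖v‖` for every `k`, `n ≥ 1` and `v`, and
both Lyapunov exponents of the associated outward cocycle vanish:
`lim (1/n)·log ‖2^{n/2}·(D(2^{n-1}k)⋯D(k))⁻¹ v‖ = 0` for every nonzero `v`. -/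
theorem RudinShapiro_block_unitary_and_zero_Lyapunov_exponents :
    (∀ (k : ℝ) (v : EuclideanSpace ℂ (Fin 2)),
      ‖Matrix.toEuclideanCLM (𝕜 := ℂ) (RSblock k) v‖ = Real.sqrt 2 * ‖v‖) ∧
    (∀ (k : ℝ) (n : ℕ), 1 ≤ n → ∀ v : EuclideanSpace ℂ (Fin 2),
      ‖Matrix.toEuclideanCLM (𝕜 := ℂ) (RSprod k n) v‖ = Real.sqrt 2 ^ n * ‖v‖) ∧
    (∀ (k : ℝ) (v : EuclideanSpace ℂ (Fin 2)), v ≠ 0 →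
      Tendsto (fun n : ℕ => (1 / n : ℝ) *
          Real.log ‖(Real.sqrt 2 ^ n : ℝ) •
            Matrix.toEuclideanCLM (𝕜 := ℂ) ((RSprod k n)⁻¹) v‖)
        atTop (nhds 0)) := by
  refine ⟨RSblock_norm_aux, fun k n _ v => RSprod_norm_aux k n v, fun k v _ => ?_⟩
  simp only [RSprod_inv_aux]
  simpa using (tendsto_one_div_atTop_nhds_zero_nat (𝕜 := ℝ)).mul_const (Real.log ‖v‖)
end
end
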